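/- arXiv:2104.12415 — 3 statements merged into one kernel-verified Lean document; each statement's English description precedes it below -/
import Mathlib

section
/- Let (A,S,Z,Φ) be a structured C*-algebra (1-interpolation). For all a,b ∈ S, if a < b then there exists s ∈ S with ‖s‖ ≤ 1 such that a <_s s* and s* < b. -/
variable {A : Type*} [CStarAlgebra A] [PartialOrder A] [StarOrderedRing A]

/-- A structured C*-algebra `(A, S, Z, Φ)`. -/
structure StructuredCStar (A : Type*) [CStarAlgebra A] [PartialOrder A]
    [StarOrderedRing A] where
  /-- The expectation. -/
  Φ : A →ₗ[ℂ] A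
  /-- The distinguished closed *-subsemigroup. -/
  S : Set A
  /-- The distinguished central C*-subalgebra. -/
  Z : Set A
  Φ_idem : ∀ a : A, Φ (Φ a) = Φ a
  Φ_contractive : ∀ a : A, ‖Φ a‖ ≤ ‖a‖
  Φ_pos : ∀ a : A, 0 ≤ a → 0 ≤ Φ a
  Φ_mul_left : ∀ a b : A, Φ (Φ a * b) = Φ a * Φ b
  Φ_mul_right : ∀ a b : A, Φ (a * Φ b) = Φ a * Φ b
  S_isClosed : IsClosed S
  S_mul : ∀ a ∈ S, ∀ b ∈ S, a * b ∈ S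
  S_star : ∀ a ∈ S, star a ∈ S
  S_smul : ∀ (c : ℂ), ∀ a ∈ S, c • a ∈ S
  Z_sub_S : Z ⊆ S
  Z_isClosed : IsClosed Z
  Z_add : ∀ a ∈ Z, ∀ b ∈ Z, a + b ∈ Z
  Z_mul : ∀ a ∈ Z, ∀ b ∈ Z, a * b ∈ Z
  Z_star : ∀ a ∈ Z, star a ∈ Z
  Z_smul : ∀ (c : ℂ), ∀ a ∈ Z, c • a ∈ Z
  Z_fixed : ∀ z ∈ Z, Φ z = z
  Z_central : ∀ z ∈ Z, ∀ a : A, z * Φ a = Φ a * z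
  PhiS_add : ∀ x ∈ Φ '' S, ∀ y ∈ Φ '' S, x + y ∈ Φ '' S
  PhiS_ideal_right : ∀ x ∈ Φ '' S, ∀ a : A, x * Φ a ∈ Φ '' S
  PhiS_ideal_left : ∀ x ∈ Φ '' S, ∀ a : A, Φ a * x ∈ Φ '' S
  S_sq_sub_PhiS : ∀ s ∈ S, star s * s ∈ Φ '' S
  PhiS_sub_S : ∀ s ∈ S, Φ s ∈ S

namespace StructuredCStar

variable (𝒜 : StructuredCStar A)

/-- `a <_s b` : domination witnessed by `s`. -/
def domBy (a s b : A) : Prop :=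
  a = a * s * b ∧ a = b * s * a ∧
  a * s ∈ 𝒜.Φ '' 𝒜.S ∧ s * a ∈ 𝒜.Φ '' 𝒜.S ∧
  b * s ∈ 𝒜.Z ∧ s * b ∈ 𝒜.Z

/-- `a < b` : domination. -/
def dom (a b : A) : Prop := ∃ s ∈ 𝒜.S, 𝒜.domBy a s b

/-- `N ⊆ S` is binormal. -/
def Binormal (N : Set A) : Prop :=
  ∀ a ∈ 𝒜.S, ∀ b ∈ 𝒜.S, a * b ∈ N → ∀ z ∈ N, a * z * b ∈ N

/-- `B ⊆ S` is bistable. -/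
def Bistable (B : Set A) : Prop :=
  ∀ a ∈ 𝒜.S, ∀ b ∈ 𝒜.S, a * b ∈ B → 𝒜.Φ a * b ∈ B ∧ a * 𝒜.Φ b ∈ B

/-- `P ⊆ S` is productive. -/
def Productive (P : Set A) : Prop :=
  ∀ a ∈ 𝒜.S, 𝒜.Φ a ∈ closure ((a * ·) '' P) ∧ 𝒜.Φ a ∈ closure ((· * a) '' P)

end StructuredCStar

/-- Functional calculus respects intertwining: if `b x = y b` then `b f(x) = f(y) b`. -/
theorem SemiconjBy.cfc_real {E : Type*} [CStarAlgebra E] {b x y : E}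
    (h : SemiconjBy b x y) (hx : IsSelfAdjoint x) (hy : IsSelfAdjoint y)
    {f : ℝ → ℝ} (hf : Continuous f) : SemiconjBy b (cfc f x) (cfc f y) := by
  have hpoly : ∀ p : Polynomial ℝ, b * Polynomial.aeval x p = Polynomial.aeval y p * b := by
    intro p
    induction p using Polynomial.induction_on' with
    | add p q hp hq => simp only [map_add, mul_add, add_mul, hp, hq]
    | monomial n r =>
      simp only [Polynomial.aeval_monomial]
      rw [← mul_assoc, ← Algebra.commutes r b, mul_assoc, (h.pow_right n).eq, mul_assoc]
  set R : ℝ := max (‖x‖ * ‖(1 : E)‖) (‖y‖ * ‖(1 : E)‖)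
  have happrox : ∀ ε : ℝ, 0 < ε → ‖b * cfc f x - cfc f y * b‖ ≤ 2 * ‖b‖ * ε := by
    intro ε hε
    obtain ⟨p, hp⟩ := exists_polynomial_near_of_continuousOn (-R) R f hf.continuousOn ε hε
    have key : ∀ u : E, IsSelfAdjoint u → ‖u‖ * ‖(1 : E)‖ ≤ R →
        ‖cfc f u - Polynomial.aeval u p‖ ≤ ε := by
      intro u hu huR
      rw [← cfc_polynomial p u hu, ← cfc_sub f p.eval u]
      refine norm_cfc_le hε.le fun v hv => ?_
      have hvR : |v| ≤ R := (spectrum.norm_le_norm_mul_of_mem hv).trans huR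
      rw [Real.norm_eq_abs, abs_sub_comm]
      exact (hp v (abs_le.mp hvR)).le
    have hsplit : b * cfc f x - cfc f y * b =
        b * (cfc f x - Polynomial.aeval x p) - (cfc f y - Polynomial.aeval y p) * b := by
      rw [mul_sub, sub_mul, hpoly p]; abel
    calc ‖b * cfc f x - cfc f y * b‖
        ≤ ‖b * (cfc f x - Polynomial.aeval x p)‖ + ‖(cfc f y - Polynomial.aeval y p) * b‖ := by
          rw [hsplit]; exact norm_sub_le _ _
      _ ≤ ‖b‖ * ε + ε * ‖b‖ := by
          refine add_le_add ((norm_mul_le _ _).trans ?_) ((norm_mul_le _ _).trans ?_)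
          · gcongr; exact key x hx (le_max_left _ _)
          · gcongr; exact key y hy (le_max_right _ _)
      _ = 2 * ‖b‖ * ε := by ring
  have hzero : ‖b * cfc f x - cfc f y * b‖ ≤ 0 := by
    refine le_of_forall_pos_le_add fun δ hδ => ?_
    refine (happrox (δ / (2 * ‖b‖ + 1)) (by positivity)).trans ?_
    rw [zero_add, mul_div_assoc', div_le_iff₀ (by positivity)]
    nlinarith [norm_nonneg b]
  exact sub_eq_zero.mp (norm_le_zero_iff.mp hzero)

/-- If `w ≤ M x` with `x` and `w` commuting, then functions of `x` supported below `c` are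
orthogonal to functions of `w` supported above `d > M c`. -/
theorem cfc_mul_cfc_eq_zero_of_le {x w : A} (hx : IsSelfAdjoint x) (hw : IsSelfAdjoint w)
    (hxw : Commute x w) {M c d : ℝ} (hM : 0 ≤ M) (hcd : M * c < d) (hle : w ≤ M • x)
    {u k : ℝ → ℝ} (hu : Continuous u) (hk : Continuous k) (hu0 : ∀ y, c < y → u y = 0)
    (hk0 : ∀ y, y < d → k y = 0) : cfc u x * cfc k w = 0 := by
  set U := cfc u x
  set K := cfc k w
  have hUs : IsSelfAdjoint U := cfc_predicate u x
  have hKs : IsSelfAdjoint K := cfc_predicate k w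
  have hUw : Commute U w := hxw.cfc_real u
  have hUK : Commute U K := (hUw.symm.cfc_real k).symm
  have hKw : Commute K w := (Commute.refl w).cfc_real k
  have hUx : U * x * U ≤ c • (U * U) := by
    have h1 : U * x * U = cfc (fun y => u y * y * u y) x := by
      rw [cfc_mul (fun y => u y * y) u x, cfc_mul u (fun y => y) x, cfc_id' ℝ x]
    have h2 : c • (U * U) = cfc (fun y => c • (u y * u y)) x := by
      rw [cfc_smul c (fun y => u y * u y) x, cfc_mul u u x]
    rw [h1, h2]
    refine cfc_mono fun y _ => ?_
    rcases lt_or_ge c y with h | h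
    · simp [hu0 y h]
    · simp only [smul_eq_mul]; nlinarith [mul_self_nonneg (u y)]
  have hKK : d • (K * K) ≤ K * w * K := by
    have h1 : K * w * K = cfc (fun y => k y * y * k y) w := by
      rw [cfc_mul (fun y => k y * y) k w, cfc_mul k (fun y => y) w, cfc_id' ℝ w]
    have h2 : d • (K * K) = cfc (fun y => d • (k y * k y)) w := by
      rw [cfc_smul d (fun y => k y * k y) w, cfc_mul k k w]
    rw [h1, h2]
    refine cfc_mono fun y _ => ?_
    rcases lt_or_ge y d with h | h
    · simp [hk0 y h]
    · simp only [smul_eq_mul]; nlinarith [mul_self_nonneg (k y)]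
  have hupper : K * (U * w * U) * K ≤ (M * c) • (K * (U * U) * K) := by
    have h1 : U * w * U ≤ (M * c) • (U * U) :=
      calc U * w * U ≤ U * (M • x) * U := hUs.conjugate_le_conjugate hle
        _ = M • (U * x * U) := by simp
        _ ≤ M • (c • (U * U)) := smul_le_smul_of_nonneg_left hUx hM
        _ = (M * c) • (U * U) := smul_smul _ _ _
    simpa using hKs.conjugate_le_conjugate h1
  have hlower : d • (U * (K * K) * U) ≤ U * (K * w * K) * U := by
    simpa using hUs.conjugate_le_conjugate hKK
  have e1 : K * (U * w * U) * K = U * (K * w * K) * U := by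
    simp only [← mul_assoc]
    rw [← hUK.eq, mul_assoc _ U K, hUK.eq, ← mul_assoc]
  have e2 : K * (U * U) * K = star (U * K) * (U * K) := by
    rw [star_mul, hUs.star_eq, hKs.star_eq]; simp only [mul_assoc]
  have e3 : U * (K * K) * U = star (U * K) * (U * K) := by
    rw [star_mul, hUs.star_eq, hKs.star_eq]
    simp only [← mul_assoc]
    rw [← hUK.eq, mul_assoc _ K U, ← hUK.eq, ← mul_assoc]
  rw [e1, e2] at hupper
  rw [e3] at hlower
  have hle0 : (d - M * c) • (star (U * K) * (U * K)) ≤ 0 := by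
    rw [sub_smul]; exact sub_nonpos.mpr (hlower.trans hupper)
  have hsq : star (U * K) * (U * K) = 0 := by
    refine le_antisymm ?_ (star_mul_self_nonneg _)
    have := smul_le_smul_of_nonneg_left hle0 (inv_nonneg.mpr (sub_pos.mpr hcd).le)
    rwa [smul_smul, inv_mul_cancel₀ (sub_pos.mpr hcd).ne', one_smul, smul_zero] at this
  exact (CStarRing.star_mul_self_eq_zero_iff _).mp hsq

/-- A closed `*`-subalgebra, presented as a set, is stable under functional calculus by
functions vanishing at `0`. -/
theorem cfc_mem_of_isClosed {E : Type*} [CStarAlgebra E] {N : Set E} (hN : IsClosed N)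
    (hadd : ∀ x ∈ N, ∀ y ∈ N, x + y ∈ N) (hmul : ∀ x ∈ N, ∀ y ∈ N, x * y ∈ N)
    (hsmul : ∀ (r : ℂ), ∀ x ∈ N, r • x ∈ N) (hstar : ∀ x ∈ N, star x ∈ N)
    {x : E} (hxN : x ∈ N) {f : ℝ → ℝ} (hf : Continuous f)
    (hf0 : f 0 = 0) : cfc f x ∈ N := by
  let B : NonUnitalStarSubalgebra ℝ E :=
    { carrier := N
      add_mem' := fun h1 h2 => hadd _ h1 _ h2
      mul_mem' := fun h1 h2 => hmul _ h1 _ h2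
      zero_mem' := by simpa using hsmul 0 x hxN
      smul_mem' := fun r y hy => by simpa using hsmul (r : ℂ) y hy
      star_mem' := fun h => hstar _ h }
  rw [← cfcₙ_eq_cfc (f := f) (a := x) hf.continuousOn hf0]
  exact NonUnitalStarAlgebra.elemental.le_of_mem (s := B) hN hxN (cfcₙ_mem_elemental f x)

namespace StructuredCStar

/-- A continuous cutoff vanishing below `1/2` and equal to `1` at `1`. -/
noncomputable def cutoff (x : ℝ) : ℝ := max 0 (min 1 (2 * x - 1))

/-- A continuous function vanishing at `0` and equal to `1 / √x` for `x ≥ c`. -/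
noncomputable def invSqrtAbove (c x : ℝ) : ℝ := x / (max x c * √(max x c))

/-- A continuous function vanishing at `0` and equal to `1 / x` for `x ≥ 1/2`. -/
noncomputable def invAboveHalf (x : ℝ) : ℝ := x / (max x (1 / 2)) ^ 2

theorem continuous_cutoff : Continuous cutoff := by unfold cutoff; fun_prop

theorem cutoff_zero : cutoff 0 = 0 := by norm_num [cutoff]

theorem cutoff_one : cutoff 1 = 1 := by norm_num [cutoff]

theorem cutoff_eq_zero {x : ℝ} (h : x < 1 / 2) : cutoff x = 0 :=
  max_eq_left ((min_le_right _ _).trans (by linarith))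

theorem abs_cutoff_le_one (x : ℝ) : |cutoff x| ≤ 1 := by
  unfold cutoff
  rw [abs_of_nonneg (le_max_left _ _)]
  exact max_le zero_le_one (min_le_left _ _)

theorem continuous_invSqrtAbove {c : ℝ} (hc : 0 < c) : Continuous (invSqrtAbove c) := by
  have hpos : ∀ x : ℝ, max x c * √(max x c) ≠ 0 := fun x => by
    have : 0 < max x c := hc.trans_le (le_max_right _ _)
    positivity
  exact continuous_id.div (by fun_prop) hpos

theorem invSqrtAbove_zero (c : ℝ) : invSqrtAbove c 0 = 0 := by simp [invSqrtAbove]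

theorem invSqrtAbove_mul_mul_self {c x : ℝ} (hc : 0 < c) (h : c < x) :
    invSqrtAbove c x * x * invSqrtAbove c x = 1 := by
  have hx : 0 < x := hc.trans h
  unfold invSqrtAbove
  rw [max_eq_left h.le]
  have hs : 0 < √x := Real.sqrt_pos.mpr hx
  field_simp
  rw [Real.sq_sqrt hx.le]

theorem continuous_invAboveHalf : Continuous invAboveHalf := by
  have hpos : ∀ x : ℝ, (max x (1 / 2)) ^ 2 ≠ 0 := fun x => by
    have : 0 < max x (1 / 2) := lt_of_lt_of_le (by norm_num) (le_max_right _ _)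
    positivity
  exact continuous_id.div (by fun_prop) hpos

theorem invAboveHalf_zero : invAboveHalf 0 = 0 := by simp [invAboveHalf]

theorem mul_invAboveHalf_mul_cutoff (x : ℝ) : x * invAboveHalf x * cutoff x = cutoff x := by
  rcases lt_or_ge x (1 / 2) with h | h
  · simp [cutoff_eq_zero h]
  · have hx : 0 < x := lt_of_lt_of_le (by norm_num) h
    unfold invAboveHalf
    rw [max_eq_left h]
    field_simp

/-- On the part where `w ≥ 1/2`, the element `x` is bounded below, so its truncated inverse square
root is a genuine one. -/
theorem invSqrtAbove_sandwich_mul_cutoff {x w : A} (hx : IsSelfAdjoint x) (hw : IsSelfAdjoint w)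
    (hxw : Commute x w) {M c : ℝ} (hM : 0 ≤ M) (hc : 0 < c) (hMc : M * c < 1 / 2)
    (hle : w ≤ M • x) :
    cfc (invSqrtAbove c) x * x * cfc (invSqrtAbove c) x * cfc cutoff w = cfc cutoff w := by
  have hg := continuous_invSqrtAbove hc
  have hzero : cfc (fun y => 1 - invSqrtAbove c y * y * invSqrtAbove c y) x * cfc cutoff w = 0 :=
    cfc_mul_cfc_eq_zero_of_le hx hw hxw hM hMc hle (by fun_prop) continuous_cutoff
      (fun y hy => by rw [invSqrtAbove_mul_mul_self hc hy, sub_self])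
      (fun y hy => cutoff_eq_zero hy)
  rw [cfc_sub (fun _ => 1) (fun y => invSqrtAbove c y * y * invSqrtAbove c y) x,
    cfc_const_one ℝ x, cfc_mul (fun y => invSqrtAbove c y * y) (invSqrtAbove c) x,
    cfc_mul (invSqrtAbove c) (fun y => y) x, cfc_id' ℝ x, sub_mul, one_mul] at hzero
  exact (sub_eq_zero.mp hzero).symm

theorem mul_cfc_invAboveHalf_mul_cfc_cutoff {E : Type*} [CStarAlgebra E] {w : E}
    (hw : IsSelfAdjoint w) :
    w * cfc invAboveHalf w * cfc cutoff w = cfc cutoff w := by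
  have hl := continuous_invAboveHalf
  have hk := continuous_cutoff
  conv_rhs => rw [← funext mul_invAboveHalf_mul_cutoff]
  rw [cfc_mul (fun y => y * invAboveHalf y) cutoff w, cfc_mul (fun y => y) invAboveHalf w,
    cfc_id' ℝ w]

variable (𝒜 : StructuredCStar A)

theorem map_star (x : A) : 𝒜.Φ (star x) = star (𝒜.Φ x) :=
  StarHomClass.map_star (PositiveLinearMap.mk₀ 𝒜.Φ 𝒜.Φ_pos) x

theorem image_eq : 𝒜.Φ '' 𝒜.S = {x | 𝒜.Φ x = x} ∩ 𝒜.S := by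
  ext x
  constructor
  · rintro ⟨s, hs, rfl⟩
    exact ⟨𝒜.Φ_idem s, 𝒜.PhiS_sub_S s hs⟩
  · rintro ⟨h, hs⟩
    exact ⟨x, hs, h⟩

theorem isClosed_image : IsClosed (𝒜.Φ '' 𝒜.S) := by
  have hcont : Continuous 𝒜.Φ :=
    AddMonoidHomClass.continuous_of_bound 𝒜.Φ 1 fun x => by simpa using 𝒜.Φ_contractive x
  rw [image_eq]
  exact (isClosed_eq hcont continuous_id).inter 𝒜.S_isClosed

theorem image_mul {x y : A} (hx : x ∈ 𝒜.Φ '' 𝒜.S) (hy : y ∈ 𝒜.Φ '' 𝒜.S) :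
    x * y ∈ 𝒜.Φ '' 𝒜.S := by
  obtain ⟨s, -, rfl⟩ := hy
  exact 𝒜.PhiS_ideal_right x hx s

theorem Z_subset_image : 𝒜.Z ⊆ 𝒜.Φ '' 𝒜.S :=
  fun z hz => ⟨z, 𝒜.Z_sub_S hz, 𝒜.Z_fixed z hz⟩

theorem image_subset_S : 𝒜.Φ '' 𝒜.S ⊆ 𝒜.S := by
  rintro _ ⟨s, hs, rfl⟩
  exact 𝒜.PhiS_sub_S s hs

theorem commute_of_mem_Z {z x : A} (hz : z ∈ 𝒜.Z) (hx : x ∈ 𝒜.Φ '' 𝒜.S) : Commute z x := by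
  obtain ⟨s, -, rfl⟩ := hx
  exact 𝒜.Z_central z hz s

theorem cfc_mem_image {x : A} (hx : x ∈ 𝒜.Φ '' 𝒜.S) {f : ℝ → ℝ}
    (hf : Continuous f) (hf0 : f 0 = 0) : cfc f x ∈ 𝒜.Φ '' 𝒜.S := by
  refine cfc_mem_of_isClosed 𝒜.isClosed_image 𝒜.PhiS_add (fun x hx y hy => 𝒜.image_mul hx hy)
    ?_ ?_ hx hf hf0
  · rintro r _ ⟨s, hs, rfl⟩
    exact ⟨r • s, 𝒜.S_smul r s hs, _root_.map_smul _ _ _⟩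
  · rintro _ ⟨s, hs, rfl⟩
    exact ⟨star s, 𝒜.S_star s hs, 𝒜.map_star s⟩

theorem cfc_mem_Z {x : A} (hx : x ∈ 𝒜.Z) {f : ℝ → ℝ}
    (hf : Continuous f) (hf0 : f 0 = 0) : cfc f x ∈ 𝒜.Z :=
  cfc_mem_of_isClosed 𝒜.Z_isClosed 𝒜.Z_add 𝒜.Z_mul 𝒜.Z_smul 𝒜.Z_star hx hf hf0

end StructuredCStar

/-- 1-interpolation: if `a < b` then there is `s ∈ S` with `‖s‖ ≤ 1`,
`a <_s s*` and `s* < b`. -/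
theorem StructuredCStar.one_interpolation (𝒜 : StructuredCStar A) {a b : A}
    (ha : a ∈ 𝒜.S) (hb : b ∈ 𝒜.S) (h : 𝒜.dom a b) :
    ∃ s ∈ 𝒜.S, ‖s‖ ≤ 1 ∧ 𝒜.domBy a s (star s) ∧ 𝒜.dom (star s) b := by
  obtain ⟨t, ht, hatb, hbta, hat, hta, hbt, htb⟩ := h
  -- Each element below comes in an initial and a primed final version, intertwined by `b`.
  obtain ⟨z, hz⟩ : ∃ z, z = t * b := ⟨_, rfl⟩
  obtain ⟨z', hz'⟩ : ∃ z', z' = b * t := ⟨_, rfl⟩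
  rw [← hz] at htb
  rw [← hz'] at hbt
  have hzn : Commute (star z) z :=
    𝒜.commute_of_mem_Z (𝒜.Z_star z htb) (𝒜.Z_subset_image htb)
  have hzn' : Commute (star z') z' :=
    𝒜.commute_of_mem_Z (𝒜.Z_star z' hbt) (𝒜.Z_subset_image hbt)
  have hbz : SemiconjBy b z z' := by
    rw [SemiconjBy, hz, hz', mul_assoc]
  have hbzs : SemiconjBy b (star z) (star z') := hbz.star_right ⟨hzn⟩ ⟨hzn'⟩
  obtain ⟨w, hw⟩ : ∃ w, w = star z * z := ⟨_, rfl⟩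
  obtain ⟨w', hw'⟩ : ∃ w', w' = star z' * z' := ⟨_, rfl⟩
  have hbw : SemiconjBy b w w' := by
    rw [hw, hw']; exact hbzs.mul_right hbz
  have hwZ : w ∈ 𝒜.Z := hw ▸ 𝒜.Z_mul _ (𝒜.Z_star _ htb) _ htb
  have hwZ' : w' ∈ 𝒜.Z := hw' ▸ 𝒜.Z_mul _ (𝒜.Z_star _ hbt) _ hbt
  have hws : IsSelfAdjoint w := hw ▸ IsSelfAdjoint.star_mul_self z
  have hws' : IsSelfAdjoint w' := hw' ▸ IsSelfAdjoint.star_mul_self z'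
  obtain ⟨x, hx⟩ : ∃ x, x = star b * b := ⟨_, rfl⟩
  obtain ⟨x', hx'⟩ : ∃ x', x' = b * star b := ⟨_, rfl⟩
  have hbx : SemiconjBy b x x' := by
    rw [SemiconjBy, hx, hx', mul_assoc]
  have hxs : IsSelfAdjoint x := hx ▸ IsSelfAdjoint.star_mul_self b
  have hxs' : IsSelfAdjoint x' := hx' ▸ IsSelfAdjoint.mul_star_self b
  have hxΦ : x ∈ 𝒜.Φ '' 𝒜.S := hx ▸ 𝒜.S_sq_sub_PhiS b hb
  have hxΦ' : x' ∈ 𝒜.Φ '' 𝒜.S := by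
    simpa [hx'] using 𝒜.S_sq_sub_PhiS (star b) (𝒜.S_star b hb)
  obtain ⟨M, hM⟩ : ∃ M : ℝ, M = ‖t‖ ^ 2 + 1 := ⟨_, rfl⟩
  have hM0 : 0 < M := by rw [hM]; positivity
  have hwx : w ≤ M • x := by
    have h1 : star t * t ≤ algebraMap ℝ A M :=
      CStarAlgebra.star_mul_le_algebraMap_norm_sq.trans
        (algebraMap_mono A (by rw [hM]; linarith))
    have h2 := star_left_conjugate_le_conjugate h1 b
    rw [Algebra.algebraMap_eq_smul_one, mul_smul_comm, smul_mul_assoc, mul_one, ← hx] at h2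
    rw [hw, hz, star_mul]
    simpa only [mul_assoc] using h2
  have hwx' : w' ≤ M • x' := by
    have h1 : t * star t ≤ algebraMap ℝ A M :=
      CStarAlgebra.mul_star_le_algebraMap_norm_sq.trans
        (algebraMap_mono A (by rw [hM]; linarith))
    have h2 := star_right_conjugate_le_conjugate h1 b
    rw [Algebra.algebraMap_eq_smul_one, mul_smul_comm, smul_mul_assoc, mul_one, ← hx'] at h2
    rw [hw', hzn'.eq, hz', star_mul]
    simpa only [mul_assoc] using h2
  obtain ⟨c, hc⟩ : ∃ c : ℝ, c = 1 / (4 * M) := ⟨_, rfl⟩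
  have hc0 : 0 < c := by rw [hc]; positivity
  have hMc : M * c < 1 / 2 := by
    rw [hc]; field_simp; norm_num
  have hkc := continuous_cutoff
  have hgc := continuous_invSqrtAbove hc0
  have hlc := continuous_invAboveHalf
  have hGK := invSqrtAbove_sandwich_mul_cutoff hxs hws (𝒜.commute_of_mem_Z hwZ hxΦ).symm
    hM0.le hc0 hMc hwx
  have hGK' := invSqrtAbove_sandwich_mul_cutoff hxs' hws' (𝒜.commute_of_mem_Z hwZ' hxΦ').symm
    hM0.le hc0 hMc hwx'
  have hwLK := mul_cfc_invAboveHalf_mul_cfc_cutoff hws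
  have hwLK' := mul_cfc_invAboveHalf_mul_cfc_cutoff hws'
  have hKZ := 𝒜.cfc_mem_Z hwZ hkc cutoff_zero
  have hKZ' := 𝒜.cfc_mem_Z hwZ' hkc cutoff_zero
  have hLZ := 𝒜.cfc_mem_Z hwZ hlc invAboveHalf_zero
  have hLZ' := 𝒜.cfc_mem_Z hwZ' hlc invAboveHalf_zero
  have hGΦ := 𝒜.cfc_mem_image hxΦ hgc (invSqrtAbove_zero c)
  have hGΦ' := 𝒜.cfc_mem_image hxΦ' hgc (invSqrtAbove_zero c)
  have hbK := hbw.cfc_real hws hws' hkc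
  have hbL := hbw.cfc_real hws hws' hlc
  have hbG := hbx.cfc_real hxs hxs' hgc
  have hKs : IsSelfAdjoint (cfc cutoff w) := cfc_predicate _ _
  have hKs' : IsSelfAdjoint (cfc cutoff w') := cfc_predicate _ _
  have hGs : IsSelfAdjoint (cfc (invSqrtAbove c) x) := cfc_predicate _ _
  have hGs' : IsSelfAdjoint (cfc (invSqrtAbove c) x') := cfc_predicate _ _
  have hKnorm : ‖cfc cutoff w‖ ≤ 1 :=
    norm_cfc_le zero_le_one fun y _ => abs_cutoff_le_one y
  have haz : a * z = a := by rw [hz, ← mul_assoc]; exact hatb.symm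
  have hza : z' * a = a := by rw [hz']; exact hbta.symm
  have hazs : a * star z = a := by
    have h1 : SemiconjBy a z 1 := by rw [SemiconjBy, one_mul, haz]
    have h2 := h1.star_right ⟨hzn⟩ (by infer_instance)
    simpa [SemiconjBy] using h2
  have hzsa : star z' * a = a := by
    have h1 : SemiconjBy a 1 z' := by rw [SemiconjBy, mul_one, hza]
    have h2 := h1.star_right (by infer_instance) ⟨hzn'⟩
    simpa [SemiconjBy] using h2.symm
  have haK : a * cfc cutoff w = a := by
    have h1 : SemiconjBy a w 1 := by rw [SemiconjBy, one_mul, hw, ← mul_assoc, hazs, haz]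
    simpa [SemiconjBy, cutoff_one] using h1.cfc_real hws (IsSelfAdjoint.one A) hkc
  have hKa : cfc cutoff w' * a = a := by
    have h1 : SemiconjBy a 1 w' := by rw [SemiconjBy, mul_one, hw', mul_assoc, hza, hzsa]
    simpa [SemiconjBy, cutoff_one] using (h1.cfc_real (IsSelfAdjoint.one A) hws' hkc).symm
  have hKG := 𝒜.commute_of_mem_Z hKZ hGΦ
  generalize cfc cutoff w = K at *
  generalize cfc cutoff w' = K' at *
  generalize cfc invAboveHalf w = L at *
  generalize cfc invAboveHalf w' = L' at *
  generalize cfc (invSqrtAbove c) x = G at *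
  generalize cfc (invSqrtAbove c) x' = G' at *
  have hs_star : star (K * G * star b) = b * G * K := by
    rw [star_mul, star_mul, star_star, hKs.star_eq, hGs.star_eq, mul_assoc]
  have hbGK : b * G * K = K' * G' * b := by
    rw [mul_assoc, ← hKG.eq, ← mul_assoc, hbK.eq, mul_assoc, hbG.eq, ← mul_assoc]
  have hs_eq : K * G * star b = star b * G' * K' := by
    have := congrArg star hbGK
    rw [← hs_star, star_star, star_mul, star_mul, hKs'.star_eq, hGs'.star_eq] at this
    rw [this, mul_assoc]
  have hsss : K * G * star b * (b * G * K) = K * K :=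
    calc K * G * star b * (b * G * K) = K * (G * x * G * K) := by
          rw [hx]; simp only [mul_assoc]
      _ = K * K := by rw [hGK]
  have hsss' : b * G * K * (K * G * star b) = K' * K' :=
    calc b * G * K * (K * G * star b) = K' * (G' * x' * G' * K') := by
          rw [hs_eq, hbGK, hx']; simp only [mul_assoc]
      _ = K' * K' := by rw [hGK']
  have hKΦ := 𝒜.Z_subset_image hKZ
  have hKΦ' := 𝒜.Z_subset_image hKZ'
  have hΦS := 𝒜.image_subset_S
  refine ⟨K * G * star b, 𝒜.S_mul _ (hΦS (𝒜.image_mul hKΦ hGΦ)) _ (𝒜.S_star b hb), ?_, ?_, ?_⟩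
  · have h1 : ‖K * G * star b‖ * ‖K * G * star b‖ ≤ 1 := by
      rw [← CStarRing.norm_self_mul_star, hs_star, hsss]
      exact (norm_mul_le _ _).trans (mul_le_one₀ hKnorm (norm_nonneg _) hKnorm)
    exact abs_le_one_iff_mul_self_le_one.mpr h1 |> (le_abs_self _).trans
  · rw [hs_star]
    refine ⟨?_, ?_, ?_, ?_, ?_, ?_⟩
    · rw [mul_assoc, hsss, ← mul_assoc, haK, haK]
    · rw [hsss', mul_assoc, hKa, hKa]
    · have : a * (K * G * star b) = a * t * (K' * G' * x') :=
        calc a * (K * G * star b) = a * z * (K * G * star b) := by rw [haz]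
          _ = a * t * (b * K * G * star b) := by rw [hz]; simp only [mul_assoc]
          _ = a * t * (K' * G' * x') := by
              rw [hbK.eq, mul_assoc K' b G, hbG.eq, hx']; simp only [mul_assoc]
      rw [this]
      exact 𝒜.image_mul hat (𝒜.image_mul (𝒜.image_mul hKΦ' hGΦ') hxΦ')
    · have : K * G * star b * a = K * G * x * (t * a) :=
        calc K * G * star b * a = K * G * star b * (z' * a) := by rw [hza]
          _ = K * G * x * (t * a) := by rw [hz', hx]; simp only [mul_assoc]
      rw [this]
      exact 𝒜.image_mul (𝒜.image_mul (𝒜.image_mul hKΦ hGΦ) hxΦ) hta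
    · rw [hsss']; exact 𝒜.Z_mul _ hKZ' _ hKZ'
    · rw [hsss]; exact 𝒜.Z_mul _ hKZ _ hKZ
  · rw [hs_star]
    have hbr : b * (t * star z' * L') = w' * L' := by
      rw [hw', hzn'.eq, hz']; simp only [mul_assoc]
    have hrb : t * star z' * L' * b = w * L := by
      rw [mul_assoc, ← hbL.eq, mul_assoc, ← mul_assoc (star z'), ← hbzs.eq, hw, hzn.eq, hz]
      simp only [mul_assoc]
    have hwLZ : w * L ∈ 𝒜.Z := 𝒜.Z_mul _ hwZ _ hLZ
    have hwLZ' : w' * L' ∈ 𝒜.Z := 𝒜.Z_mul _ hwZ' _ hLZ'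
    refine ⟨t * star z' * L', 𝒜.S_mul _ (𝒜.S_mul _ ht _ (𝒜.Z_sub_S (𝒜.Z_star _ hbt))) _
      (𝒜.Z_sub_S hLZ'), ?_, ?_, ?_, ?_, ?_, ?_⟩
    · rw [mul_assoc _ _ b, hrb, mul_assoc _ K, ← (𝒜.commute_of_mem_Z hwLZ hKΦ).eq, hwLK]
    · rw [hbr, hbGK, mul_assoc K', ← mul_assoc _ K', hwLK']
    · have : b * G * K * (t * star z' * L') = K' * G' * (w' * L') := by
        rw [hbGK, mul_assoc, hbr]
      rw [this]
      exact 𝒜.image_mul (𝒜.image_mul hKΦ' hGΦ') (𝒜.Z_subset_image hwLZ')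
    · have : t * star z' * L' * (b * G * K) = w * L * (G * K) := by
        rw [mul_assoc b, ← mul_assoc, hrb]
      rw [this]
      exact 𝒜.image_mul (𝒜.Z_subset_image hwLZ) (𝒜.image_mul hGΦ hKΦ)
    · rw [hbr]; exact hwLZ'
    · rw [hrb]; exact hwLZ
end

section
/- Let (A,S,Z,Φ) be a structured C*-algebra. If a ∈ S, b ∈ Z and a < b, then there exists z ∈ Z with a <_z b. -/
variable {A : Type*} [CStarAlgebra A] [PartialOrder A] [StarOrderedRing A]

namespace StructuredCStar

/-- The elements of `A` that multiply `Z` into itself on both sides. -/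
def multiplierZ (𝒜 : StructuredCStar A) : StarSubalgebra ℂ A where
  carrier := {y | ∀ z ∈ 𝒜.Z, y * z ∈ 𝒜.Z ∧ z * y ∈ 𝒜.Z}
  mul_mem' {x y} hx hy z hz := by
    refine ⟨?_, ?_⟩
    · rw [mul_assoc]
      exact (hx _ (hy z hz).1).1
    · rw [← mul_assoc]
      exact (hy _ (hx z hz).2).2
  add_mem' {x y} hx hy z hz := by
    refine ⟨?_, ?_⟩
    · rw [add_mul]
      exact 𝒜.Z_add _ (hx z hz).1 _ (hy z hz).1
    · rw [mul_add]
      exact 𝒜.Z_add _ (hx z hz).2 _ (hy z hz).2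
  algebraMap_mem' r z hz := by
    rw [Algebra.algebraMap_eq_smul_one, smul_mul_assoc, mul_smul_comm, one_mul, mul_one]
    exact ⟨𝒜.Z_smul r z hz, 𝒜.Z_smul r z hz⟩
  star_mem' {x} hx z hz := by
    have h := hx _ (𝒜.Z_star z hz)
    exact ⟨by simpa using 𝒜.Z_star _ h.2, by simpa using 𝒜.Z_star _ h.1⟩

theorem mem_multiplierZ (𝒜 : StructuredCStar A) {y : A} :
    y ∈ 𝒜.multiplierZ ↔ ∀ z ∈ 𝒜.Z, y * z ∈ 𝒜.Z ∧ z * y ∈ 𝒜.Z :=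
  Iff.rfl

theorem isClosed_multiplierZ (𝒜 : StructuredCStar A) :
    IsClosed (𝒜.multiplierZ : Set A) := by
  have h : (𝒜.multiplierZ : Set A) =
      ⋂ z ∈ 𝒜.Z, (· * z) ⁻¹' 𝒜.Z ∩ (z * ·) ⁻¹' 𝒜.Z := by
    ext y
    simp [mem_multiplierZ]
  rw [h]
  exact isClosed_biInter fun z _ =>
    (𝒜.Z_isClosed.preimage (continuous_mul_const z)).inter
      (𝒜.Z_isClosed.preimage (continuous_const_mul z))

theorem Z_subset_multiplierZ (𝒜 : StructuredCStar A) {y : A} (hy : y ∈ 𝒜.Z) :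
    y ∈ 𝒜.multiplierZ :=
  fun z hz => ⟨𝒜.Z_mul y hy z hz, 𝒜.Z_mul z hz y hy⟩

theorem Z_comm (𝒜 : StructuredCStar A) {y z : A} (hy : y ∈ 𝒜.Z) (hz : z ∈ 𝒜.Z) :
    y * z = z * y := by
  simpa [𝒜.Z_fixed z hz] using 𝒜.Z_central y hy z

end StructuredCStar

/-- If `e` is a right multiple of `b`, then `b` and `1 - e` are jointly bounded below: `1` is at
most a multiple of `b * star b + (1 - e) * star (1 - e)`. -/
theorem isUnit_mul_star_add_one_sub_mul_star (b s : A) :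
    IsUnit (b * star b + (1 - b * s) * star (1 - b * s)) := by
  set c : ℝ := max ‖s * star s‖ 1
  have hc : 0 < c := lt_max_of_lt_right one_pos
  have h₁ : b * s * star (b * s) ≤ c • (b * star b) := by
    calc b * s * star (b * s) = b * (s * star s) * star b := by simp [mul_assoc]
      _ ≤ ‖s * star s‖ • (b * star b) :=
        CStarAlgebra.star_right_conjugate_le_norm_smul (IsSelfAdjoint.mul_star_self s)
      _ ≤ c • (b * star b) :=
        smul_le_smul_of_nonneg_right (le_max_left _ _) (mul_star_self_nonneg b)
  have h₂ : (1 - b * s) * star (1 - b * s) ≤ c • ((1 - b * s) * star (1 - b * s)) := by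
    simpa using smul_le_smul_of_nonneg_right (le_max_right ‖s * star s‖ 1)
      (mul_star_self_nonneg (1 - b * s))
  have h₃ : (1 : A) ≤ (2 : ℝ) • (b * s * star (b * s) + (1 - b * s) * star (1 - b * s)) := by
    rw [← sub_nonneg]
    convert mul_star_self_nonneg (1 - (2 : ℝ) • (b * s)) using 1
    generalize b * s = e
    simp only [star_sub, star_one, star_add, two_smul]
    noncomm_ring
  have h₄ : (1 : A) ≤
      (2 * c) • (b * star b + (1 - b * s) * star (1 - b * s)) := by
    refine h₃.trans ?_
    rw [mul_smul, smul_add c]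
    exact smul_le_smul_of_nonneg_left (add_le_add h₁ h₂) zero_le_two
  have h₅ := CStarAlgebra.isUnit_of_le 1 h₄
  have h2c : (2 * c) ≠ 0 := by positivity
  exact (isUnit_smul_iff (Units.mk0 _ h2c) _).mp h₅

/-- if `a < b ∈ Z` then `a <_z b` for some `z ∈ Z`. -/
theorem StructuredCStar.dom_Z_witness (𝒜 : StructuredCStar A) {a b : A}
    (ha : a ∈ 𝒜.S) (hb : b ∈ 𝒜.Z) (h : 𝒜.dom a b) :
    ∃ z ∈ 𝒜.Z, 𝒜.domBy a z b := by
  obtain ⟨s, -, hasb, hbsa, ⟨t, -, ht⟩, -, hbs, -⟩ := h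
  have hΦa : 𝒜.Φ a = a := by
    rw [hasb, ← ht, 𝒜.Φ_mul_left, 𝒜.Z_fixed b hb]
  have hcomm : ∀ z ∈ 𝒜.Z, z * a = a * z := fun z hz => by
    simpa [hΦa] using 𝒜.Z_central z hz a
  have hae : a * (1 - b * s) = 0 := by
    rw [mul_sub, mul_one, ← hcomm _ hbs, ← hbsa, sub_self]
  obtain ⟨u, hu⟩ := isUnit_mul_star_add_one_sub_mul_star b s
  have hu_mem : (u : A) ∈ 𝒜.multiplierZ := by
    have hb' := 𝒜.Z_subset_multiplierZ hb
    have he' := sub_mem (one_mem _) (𝒜.Z_subset_multiplierZ hbs)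
    rw [hu]
    exact add_mem (mul_mem hb' (star_mem hb')) (mul_mem he' (star_mem he'))
  have hinv_mem : ((u⁻¹ : Aˣ) : A) ∈ 𝒜.multiplierZ := by
    have := 𝒜.isClosed_multiplierZ
    obtain ⟨v, hv⟩ := 𝒜.multiplierZ.coe_isUnit (a := ⟨u, hu_mem⟩) |>.mp u.isUnit
    have huv : (u : A) * ((v⁻¹ : (𝒜.multiplierZ)ˣ) : 𝒜.multiplierZ) = 1 := by
      simpa [hv] using congrArg Subtype.val v.mul_inv
    rw [Units.inv_eq_of_mul_eq_one_right huv]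
    exact SetLike.coe_mem _
  have hau : a * u = a * b * star b := by
    rw [hu, mul_add, ← mul_assoc, ← mul_assoc, hae, zero_mul, add_zero]
  have hz : star b * ((u⁻¹ : Aˣ) : A) ∈ 𝒜.Z := (hinv_mem _ (𝒜.Z_star b hb)).2
  generalize hzdef : star b * ((u⁻¹ : Aˣ) : A) = z at hz
  have habz : a = a * b * z := by
    rw [← hzdef, ← mul_assoc, ← hau, Units.mul_inv_cancel_right]
  have hazb : a = a * z * b := by rwa [mul_assoc, 𝒜.Z_comm hz hb, ← mul_assoc]
  have haz : a * z ∈ 𝒜.Φ '' 𝒜.S := by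
    refine ⟨a * z, 𝒜.S_mul a ha z (𝒜.Z_sub_S hz), ?_⟩
    have := 𝒜.Φ_mul_left a z
    rwa [hΦa, 𝒜.Z_fixed z hz] at this
  refine ⟨z, hz, hazb, ?_, haz, ?_, 𝒜.Z_mul b hb z hz, 𝒜.Z_mul z hz b hb⟩
  · rwa [hcomm _ (𝒜.Z_mul b hb z hz), ← mul_assoc]
  · rwa [hcomm z hz]
end

section
/- Let (A,S,Z,Φ) be a structured C*-algebra. Then Z is binormal if and only if Z¹₊ (the set of positive elements of Z of norm at most 1) is binormal. -/
variable {A : Type*} [CStarAlgebra A] [PartialOrder A] [StarOrderedRing A]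

/-- A normal element `x` with `x x⋆ (x - x⋆) = 0` is self-adjoint. -/
theorem isSelfAdjoint_of_mul_star_mul_sub_eq_zero {B : Type*} [CStarAlgebra B] {x : B}
    (hx : Commute x (star x)) (h : x * star x * (x - star x) = 0) : IsSelfAdjoint x := by
  have h₁ : x * (x - star x) = 0 := by
    rw [← CStarRing.star_mul_self_eq_zero_iff, star_mul, mul_assoc, ← mul_assoc (star x),
      ← hx.eq, h, mul_zero]
  have h₂ : star x * (x - star x) = 0 := by
    rw [← CStarRing.star_mul_self_eq_zero_iff, star_mul, star_star, mul_assoc, ← mul_assoc x,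
      h, mul_zero]
  have h₃ : x - star x = 0 := by
    rw [← CStarRing.star_mul_self_eq_zero_iff, star_sub, star_star, sub_mul, h₁, h₂, sub_zero]
  exact (sub_eq_zero.mp h₃).symm

/-- A self-adjoint element with a nonnegative odd power is nonnegative. -/
theorem IsSelfAdjoint.nonneg_of_odd_pow {x : A} (hx : IsSelfAdjoint x) {n : ℕ} (hn : Odd n)
    (h : 0 ≤ x ^ n) : 0 ≤ x := by
  rw [StarOrderedRing.nonneg_iff_spectrum_nonneg (R := ℝ) x hx]
  intro r hr
  exact hn.pow_nonneg_iff.mp (spectrum_nonneg_of_nonneg h (spectrum.pow_mem_pow x n hr))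

theorem norm_one_sub_pow_le_one {h : A} (h₀ : 0 ≤ h) (h₁ : h ≤ 1) (n : ℕ) :
    ‖(1 - h) ^ n‖ ≤ 1 := by
  have hn : ‖1 - h‖ ≤ 1 :=
    (CStarAlgebra.norm_le_one_iff_of_nonneg _ (sub_nonneg.mpr h₁)).mpr (sub_le_self _ h₀)
  rcases subsingleton_or_nontrivial A with _ | _
  · simp [Subsingleton.elim ((1 - h) ^ n) 0]
  · exact (norm_pow_le _ n).trans (pow_le_one₀ (norm_nonneg _) hn)

theorem norm_mul_one_sub_pow_le {h : A} (h₀ : 0 ≤ h) (h₁ : h ≤ 1) (n : ℕ) :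
    ‖h * (1 - h) ^ n‖ ≤ 1 / ((n : ℝ) + 1) := by
  have hsa : IsSelfAdjoint h := .of_nonneg h₀
  have hcfc : h * (1 - h) ^ n = cfc (fun t : ℝ ↦ t * (1 - t) ^ n) h := by
    rw [cfc_mul (fun t : ℝ ↦ t) (fun t : ℝ ↦ (1 - t) ^ n) h, cfc_pow (fun t : ℝ ↦ 1 - t) n h,
      cfc_sub (fun _ : ℝ ↦ (1 : ℝ)) (fun t : ℝ ↦ t) h, cfc_id' ℝ h, cfc_const_one ℝ h]
  rw [hcfc]
  refine norm_cfc_le (by positivity) fun t ht ↦ ?_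
  have ht₀ : 0 ≤ t := spectrum_nonneg_of_nonneg h₀ ht
  have ht₁ : t ≤ 1 := (le_algebraMap_iff_spectrum_le (r := (1 : ℝ)) (a := h)).mp (by simpa) t ht
  have hp₀ : 0 ≤ (1 - t) ^ n := pow_nonneg (by linarith) n
  rw [Real.norm_of_nonneg (mul_nonneg ht₀ hp₀), le_div_iff₀ (by positivity)]
  have hb : 1 + n * t ≤ (1 + t) ^ n := one_add_mul_le_pow (by linarith) n
  have hm : (1 + t) ^ n * (1 - t) ^ n ≤ 1 := by
    rw [← mul_pow]
    exact pow_le_one₀ (by nlinarith) (by nlinarith)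
  have hbm : (1 + n * t) * (1 - t) ^ n ≤ (1 + t) ^ n * (1 - t) ^ n := by gcongr
  have htm : t * (1 - t) ^ n ≤ 1 * (1 - t) ^ n := by gcongr
  linarith

namespace StructuredCStar

variable (𝒜 : StructuredCStar A)

theorem commute_of_mem_Z_s14 {y z : A} (hy : y ∈ 𝒜.Z) (hz : z ∈ 𝒜.Z) : Commute y z := by
  have h := 𝒜.Z_central y hy z
  rwa [𝒜.Z_fixed z hz] at h

theorem commute_star_mul_self {z s : A} (hz : z ∈ 𝒜.Z) (hs : s ∈ 𝒜.S) :
    Commute z (star s * s) := by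
  obtain ⟨t, -, ht⟩ := 𝒜.S_sq_sub_PhiS s hs
  rw [← ht]
  exact 𝒜.Z_central z hz t

theorem commute_mul_star_self {z s : A} (hz : z ∈ 𝒜.Z) (hs : s ∈ 𝒜.S) :
    Commute z (s * star s) := by
  simpa using 𝒜.commute_star_mul_self hz (𝒜.S_star s hs)

theorem sub_mem_Z {y z : A} (hy : y ∈ 𝒜.Z) (hz : z ∈ 𝒜.Z) : y - z ∈ 𝒜.Z := by
  have h := 𝒜.Z_add y hy _ (𝒜.Z_smul (-1) z hz)
  rwa [neg_one_smul, ← sub_eq_add_neg] at h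

theorem real_smul_mem_Z (r : ℝ) {z : A} (hz : z ∈ 𝒜.Z) : r • z ∈ 𝒜.Z := by
  simpa only [Complex.coe_smul] using 𝒜.Z_smul (r : ℂ) z hz

/-- `Z` as a non-unital real ⋆-subalgebra, given that it is nonempty. -/
def realStarSubalgebra (h₀ : (0 : A) ∈ 𝒜.Z) : NonUnitalStarSubalgebra ℝ A where
  carrier := 𝒜.Z
  add_mem' ha hb := 𝒜.Z_add _ ha _ hb
  mul_mem' ha hb := 𝒜.Z_mul _ ha _ hb
  zero_mem' := h₀
  smul_mem' r _ ha := 𝒜.real_smul_mem_Z r ha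
  star_mem' ha := 𝒜.Z_star _ ha

theorem cfcₙ_mem_Z {z : A} (hz : z ∈ 𝒜.Z) (f : ℝ → ℝ) : cfcₙ f z ∈ 𝒜.Z := by
  have h₀ : (0 : A) ∈ 𝒜.Z := by simpa using 𝒜.Z_smul 0 z hz
  exact NonUnitalStarAlgebra.elemental.le_of_mem (s := 𝒜.realStarSubalgebra h₀) 𝒜.Z_isClosed hz
    (cfcₙ_mem_elemental f z)

/-- A complex subspace containing the nonnegative elements of `Z` contains `Z`. -/
theorem Z_subset_of_nonneg_mem (p : Submodule ℂ A) (hp : ∀ z ∈ 𝒜.Z, 0 ≤ z → z ∈ p) :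
    𝒜.Z ⊆ p := by
  have hsa : ∀ z ∈ 𝒜.Z, IsSelfAdjoint z → z ∈ p := fun z hz hs ↦ by
    rw [← CFC.posPart_sub_negPart z hs]
    exact p.sub_mem (hp _ (𝒜.cfcₙ_mem_Z hz _) (CFC.posPart_nonneg z))
      (hp _ (𝒜.cfcₙ_mem_Z hz _) (CFC.negPart_nonneg z))
  intro z hz
  have hre : (realPart z : A) ∈ 𝒜.Z := by
    rw [realPart_apply_coe]
    exact 𝒜.real_smul_mem_Z _ (𝒜.Z_add _ hz _ (𝒜.Z_star _ hz))
  have him : (imaginaryPart z : A) ∈ 𝒜.Z := by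
    rw [imaginaryPart_apply_coe]
    exact 𝒜.Z_smul _ _ (𝒜.real_smul_mem_Z _ (𝒜.sub_mem_Z hz (𝒜.Z_star _ hz)))
  rw [← realPart_add_I_smul_imaginaryPart z]
  exact p.add_mem (hsa _ hre (realPart z).2) (p.smul_mem _ (hsa _ him (imaginaryPart z).2))

theorem conj_mul_star_conj {a b z : A} (hb : b ∈ 𝒜.S) {y : A} (hy : y ∈ 𝒜.Z) :
    a * z * b * star (a * y * b) = a * (z * star y) * b * star (a * b) := by
  have h := (𝒜.commute_mul_star_self (𝒜.Z_star y hy) hb).eq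
  calc a * z * b * star (a * y * b) = a * z * (b * star b * star y) * star a := by
        simp only [star_mul, mul_assoc]
    _ = a * (z * star y) * b * star (a * b) := by
        rw [← h]; simp only [star_mul, mul_assoc]

theorem star_conj_mul_conj {a b z : A} (ha : a ∈ 𝒜.S) {y : A} (hy : y ∈ 𝒜.Z) :
    star (a * y * b) * (a * z * b) = star (a * b) * (a * (star y * z) * b) := by
  have h := (𝒜.commute_star_mul_self (𝒜.Z_star y hy) ha).eq
  calc star (a * y * b) * (a * z * b) = star b * (star y * (star a * a)) * z * b := by
        simp only [star_mul, mul_assoc]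
    _ = star (a * b) * (a * (star y * z) * b) := by
        rw [h]; simp only [star_mul, mul_assoc]

theorem conj_mul_star_mul {a b z : A} (hb : b ∈ 𝒜.S) (hz : z ∈ 𝒜.Z) :
    a * z * b * star (a * b) = a * (z * (b * star b)) * star a ∧
      a * b * star (a * star z * b) = a * (z * (b * star b)) * star a := by
  constructor
  · simp only [star_mul, mul_assoc]
  · rw [(𝒜.commute_mul_star_self hz hb).eq]
    simp only [star_mul, star_star, mul_assoc]

theorem Binormal.isSelfAdjoint_conj {𝒜 : StructuredCStar A} (hZ : 𝒜.Binormal 𝒜.Z) {a b z : A}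
    (ha : a ∈ 𝒜.S) (hb : b ∈ 𝒜.S) (hab : a * b ∈ 𝒜.Z) (hsa : IsSelfAdjoint (a * b))
    (hz : z ∈ 𝒜.Z) (hzsa : IsSelfAdjoint z) : IsSelfAdjoint (a * z * b) := by
  have hx := hZ a ha b hb hab z hz
  refine isSelfAdjoint_of_mul_star_mul_sub_eq_zero
    (𝒜.commute_of_mem_Z_s14 hx (𝒜.Z_star _ hx)) ?_
  have h₁ := 𝒜.conj_mul_star_conj (a := a) (z := z) hb hz
  have h₂ := 𝒜.conj_mul_star_mul (a := a) hb hz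
  rw [hzsa.star_eq, hsa.star_eq] at *
  rw [h₁, mul_assoc, mul_sub, (𝒜.commute_of_mem_Z_s14 hab hx).eq, h₂.1, h₂.2, sub_self, mul_zero]

theorem Binormal.conj_nonneg {𝒜 : StructuredCStar A} (hZ : 𝒜.Binormal 𝒜.Z) {a b z : A}
    (ha : a ∈ 𝒜.S) (hb : b ∈ 𝒜.S) (hab : a * b ∈ 𝒜.Z) (hab₀ : 0 ≤ a * b)
    (hz : z ∈ 𝒜.Z) (hz₀ : 0 ≤ z) : 0 ≤ a * z * b := by
  have hsa : IsSelfAdjoint (a * b) := .of_nonneg hab₀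
  have hzsa : IsSelfAdjoint z := .of_nonneg hz₀
  have hx := hZ a ha b hb hab z hz
  have hz2 := 𝒜.Z_mul z hz z hz
  have hu := hZ a ha b hb hab _ hz2
  have hxsa := hZ.isSelfAdjoint_conj ha hb hab hsa hz hzsa
  have husa := hZ.isSelfAdjoint_conj ha hb hab hsa hz2 (.of_nonneg hzsa.mul_self_nonneg)
  have hsq := 𝒜.conj_mul_star_conj (a := a) (z := z) hb hz
  have hxw := (𝒜.conj_mul_star_mul (a := a) hb hz).1
  rw [hxsa.star_eq, hzsa.star_eq, hsa.star_eq] at hsq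
  rw [hsa.star_eq] at hxw
  have hxw₀ : 0 ≤ a * z * b * (a * b) := by
    rw [hxw]
    exact star_right_conjugate_nonneg
      (Commute.mul_nonneg hz₀ (mul_star_self_nonneg b) (𝒜.commute_mul_star_self hz hb)) a
  have cxu := 𝒜.commute_of_mem_Z_s14 hx hu
  have cxw := 𝒜.commute_of_mem_Z_s14 hx hab
  have cuw := 𝒜.commute_of_mem_Z_s14 hu hab
  generalize a * z * b = x at *
  generalize a * (z * z) * b = u at *
  generalize a * b = w at *
  refine hxsa.nonneg_of_odd_pow (n := 5) (by decide) ?_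
  have hpow : x ^ 5 = x * w * (u * w * u) := by
    calc x ^ 5 = x * ((x * x) * (x * x)) := by noncomm_ring
      _ = x * w * (u * w * u) := by
        rw [hsq, mul_assoc x w, mul_assoc u w u, ← cuw.eq, ← mul_assoc w, ← cuw.eq]
  rw [hpow]
  refine Commute.mul_nonneg hxw₀ (husa.conjugate_nonneg hab₀) ?_
  exact .mul_left ((cxu.mul_right cxw).mul_right cxu)
    ((cuw.symm.mul_right (.refl w)).mul_right cuw.symm)

theorem norm_conj_le {a b z : A} (hb : b ∈ 𝒜.S) (hz : z ∈ 𝒜.Z) (hz₀ : 0 ≤ z) (hz₁ : ‖z‖ ≤ 1) :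
    ‖a * z * b‖ ≤ ‖a * b‖ := by
  have hzsa : IsSelfAdjoint z := .of_nonneg hz₀
  have hz2 := 𝒜.Z_mul z hz z hz
  have hle : z * z ≤ 1 := by
    rw [← CStarAlgebra.norm_le_one_iff_of_nonneg _ hzsa.mul_self_nonneg]
    exact (norm_mul_le z z).trans (mul_le_one₀ hz₁ (norm_nonneg _) hz₁)
  have hc : z * z * (b * star b) ≤ b * star b := by
    have h := Commute.mul_nonneg (sub_nonneg.mpr hle) (mul_star_self_nonneg b)
      ((Commute.one_left _).sub_left (𝒜.commute_mul_star_self hz2 hb))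
    rwa [sub_mul, one_mul, sub_nonneg] at h
  have hle₂ : a * z * b * star (a * z * b) ≤ a * b * star (a * b) := by
    rw [𝒜.conj_mul_star_conj hb hz, hzsa.star_eq, (𝒜.conj_mul_star_mul hb hz2).1]
    simpa only [star_mul, mul_assoc] using star_right_conjugate_le_conjugate hc a
  have hn := CStarAlgebra.norm_le_norm_of_nonneg_of_le (mul_star_self_nonneg _) hle₂
  rw [CStarRing.norm_self_mul_star, CStarRing.norm_self_mul_star] at hn
  exact le_of_sq_le_sq (by simpa only [sq] using hn) (norm_nonneg _)

/-- If `Z¹₊` is binormal, then `a Z b (ab)⋆ ⊆ Z` whenever `ab ∈ Z` is a contraction. -/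
theorem Binormal.conj_mul_star_mem {𝒜 : StructuredCStar A}
    (hN : 𝒜.Binormal {z ∈ 𝒜.Z | 0 ≤ z ∧ ‖z‖ ≤ 1}) {a b z : A}
    (ha : a ∈ 𝒜.S) (hb : b ∈ 𝒜.S) (hab : a * b ∈ 𝒜.Z) (hab₁ : ‖a * b‖ ≤ 1) (hz : z ∈ 𝒜.Z) :
    a * z * b * star (a * b) ∈ 𝒜.Z := by
  let p : Submodule ℂ A :=
    { carrier := {y | a * y * b * star (a * b) ∈ 𝒜.Z}
      add_mem' := fun {x y} hx hy ↦ by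
        simpa only [Set.mem_ofPred_eq, mul_add, add_mul] using 𝒜.Z_add _ hx _ hy
      zero_mem' := by simpa using 𝒜.Z_smul 0 z hz
      smul_mem' := fun c x hx ↦ by
        simpa only [Set.mem_ofPred_eq, mul_smul_comm, smul_mul_assoc] using 𝒜.Z_smul c _ hx }
  refine 𝒜.Z_subset_of_nonneg_mem p (fun y hy hy₀ ↦ ?_) hz
  have hstar := 𝒜.Z_star _ hab
  have hb' : b * star (a * b) ∈ 𝒜.S := 𝒜.S_mul _ hb _ (𝒜.Z_sub_S hstar)
  have hr : 0 < 1 + ‖y‖ := by positivity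
  have hmem : ((1 + ‖y‖)⁻¹ : ℝ) • y ∈ 𝒜.Z := 𝒜.real_smul_mem_Z _ hy
  have h := hN a ha _ hb' ⟨by rw [← mul_assoc]; exact 𝒜.Z_mul _ hab _ hstar,
    by rw [← mul_assoc]; exact mul_star_self_nonneg _,
    by rw [← mul_assoc, CStarRing.norm_self_mul_star]
       exact mul_le_one₀ hab₁ (norm_nonneg _) hab₁⟩ (((1 + ‖y‖)⁻¹ : ℝ) • y)
    ⟨hmem, smul_nonneg (by positivity) hy₀, by
      rw [norm_smul, Real.norm_of_nonneg (by positivity), inv_mul_le_one₀ hr]; linarith⟩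
  have h' := 𝒜.real_smul_mem_Z (1 + ‖y‖) h.1
  rw [mul_smul_comm, smul_mul_assoc, smul_inv_smul₀ hr.ne', ← mul_assoc] at h'
  exact h'

/-- If `Z¹₊` is binormal, then `a Z b ⊆ Z` whenever `ab ∈ Z` is a contraction: `a z b` is the
limit of `a z b (1 - (1 - h) ^ n)` where `h = (ab)⋆ (ab)`. -/
theorem Binormal.conj_mem_of_norm_le_one {𝒜 : StructuredCStar A}
    (hN : 𝒜.Binormal {z ∈ 𝒜.Z | 0 ≤ z ∧ ‖z‖ ≤ 1}) {a b z : A}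
    (ha : a ∈ 𝒜.S) (hb : b ∈ 𝒜.S) (hab : a * b ∈ 𝒜.Z) (hab₁ : ‖a * b‖ ≤ 1) (hz : z ∈ 𝒜.Z) :
    a * z * b ∈ 𝒜.Z := by
  have hxw := hN.conj_mul_star_mem ha hb hab hab₁ hz
  have hxx := 𝒜.star_conj_mul_conj (b := b) (z := z) ha hz
  generalize a * (star z * z) * b = v at *
  generalize a * z * b = x at *
  generalize a * b = w at *
  set h := star w * w with hh
  have hhZ : h ∈ 𝒜.Z := 𝒜.Z_mul _ (𝒜.Z_star _ hab) _ hab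
  have h₀ : 0 ≤ h := star_mul_self_nonneg w
  have h₁ : h ≤ 1 := by
    rw [← CStarAlgebra.norm_le_one_iff_of_nonneg _ h₀, hh, CStarRing.norm_star_mul_self]
    exact mul_le_one₀ hab₁ (norm_nonneg _) hab₁
  have hxh : x * h ∈ 𝒜.Z := by
    rw [hh, ← mul_assoc]
    exact 𝒜.Z_mul _ hxw _ hab
  have hmem : ∀ n : ℕ, x - x * (1 - h) ^ n ∈ 𝒜.Z := by
    intro n
    induction n with
    | zero => simpa using 𝒜.Z_smul 0 w hab
    | succ n ih =>
      have := 𝒜.sub_mem_Z (𝒜.Z_add _ ih _ hxh) (𝒜.Z_mul _ ih _ hhZ)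
      convert this using 1
      rw [pow_succ]
      noncomm_ring
  have hnorm : ∀ n : ℕ, ‖x * (1 - h) ^ n‖ ^ 2 ≤ √(1 / ((n : ℝ) + 1)) * ‖v‖ := by
    intro n
    have hk : IsSelfAdjoint ((1 - h) ^ n) :=
      ((IsSelfAdjoint.one A).sub (.of_nonneg h₀)).pow n
    have hk₁ := norm_one_sub_pow_le_one h₀ h₁ n
    have hwk : ‖(1 - h) ^ n * star w‖ ≤ √(1 / ((n : ℝ) + 1)) := by
      apply Real.le_sqrt_of_sq_le
      rw [sq, ← CStarRing.norm_self_mul_star, star_mul, star_star, hk.star_eq, mul_assoc,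
        ← mul_assoc (star w), ← hh]
      exact (norm_mul_le _ _).trans ((mul_le_of_le_one_left (norm_nonneg _) hk₁).trans
        (norm_mul_one_sub_pow_le h₀ h₁ n))
    calc ‖x * (1 - h) ^ n‖ ^ 2 = ‖(1 - h) ^ n * star w * v * (1 - h) ^ n‖ := by
          rw [sq, ← CStarRing.norm_star_mul_self, star_mul, hk.star_eq, mul_assoc,
            ← mul_assoc (star x), hxx]
          simp only [mul_assoc]
      _ ≤ ‖(1 - h) ^ n * star w‖ * ‖v‖ * ‖(1 - h) ^ n‖ :=
          (norm_mul_le _ _).trans (by gcongr; exact norm_mul_le _ _)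
      _ ≤ √(1 / ((n : ℝ) + 1)) * ‖v‖ * 1 := by gcongr
      _ = √(1 / ((n : ℝ) + 1)) * ‖v‖ := mul_one _
  have hlim : Filter.Tendsto (fun n : ℕ ↦ x * (1 - h) ^ n) Filter.atTop (nhds 0) := by
    have hb₀ : Filter.Tendsto (fun n : ℕ ↦ √(1 / ((n : ℝ) + 1)) * ‖v‖) Filter.atTop
        (nhds 0) := by
      simpa using (tendsto_one_div_add_atTop_nhds_zero_nat (𝕜 := ℝ)).sqrt.mul_const ‖v‖
    have hs := squeeze_zero (fun n ↦ by positivity) hnorm hb₀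
    rw [tendsto_zero_iff_norm_tendsto_zero]
    simpa using hs.sqrt
  refine 𝒜.Z_isClosed.mem_of_tendsto (b := Filter.atTop) ?_ (Filter.Eventually.of_forall hmem)
  simpa using hlim.const_sub x

end StructuredCStar

/-- `Z` is binormal iff `Z¹₊` is binormal. -/
theorem StructuredCStar.binormal_iff_binormal_pos_unitBall (𝒜 : StructuredCStar A) :
    𝒜.Binormal 𝒜.Z ↔ 𝒜.Binormal {z ∈ 𝒜.Z | 0 ≤ z ∧ ‖z‖ ≤ 1} := by
  constructor
  · rintro hZ a ha b hb ⟨hab, hab₀, hab₁⟩ z ⟨hz, hz₀, hz₁⟩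
    exact ⟨hZ a ha b hb hab z hz, hZ.conj_nonneg ha hb hab hab₀ hz hz₀,
      (𝒜.norm_conj_le hb hz hz₀ hz₁).trans hab₁⟩
  · intro hN a ha b hb hab z hz
    have hr : 0 < 1 + ‖a * b‖ := by positivity
    have hr' : ((1 + ‖a * b‖ : ℝ) : ℂ) ≠ 0 := by exact_mod_cast hr.ne'
    have h := hN.conj_mem_of_norm_le_one ha (𝒜.S_smul ((1 + ‖a * b‖ : ℝ) : ℂ)⁻¹ b hb)
      (by rw [mul_smul_comm]; exact 𝒜.Z_smul _ _ hab)
      (by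
        rw [mul_smul_comm, norm_smul, norm_inv, Complex.norm_real,
          Real.norm_of_nonneg hr.le, inv_mul_le_one₀ hr]
        linarith) hz
    have h' := 𝒜.Z_smul ((1 + ‖a * b‖ : ℝ) : ℂ) _ h
    rwa [mul_smul_comm, smul_inv_smul₀ hr'] at h'
end
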